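/- Let m be a finitely additive measure on L(H) with values in [0,∞] and suppose m has the L-S property: there is a two-dimensional subspace Q with m(Q) < ∞. Then D(m) := {x ∈ H \ {0} : m(span{x}) < ∞} ∪ {0} is a linear subspace of H. -/

import Mathlib

open scoped InnerProductSpace ENNReal

/-- Real three-dimensional sets closed under scaling and orthogonal sums. -/
structure OrthClosed (E : ℝ → ℝ → ℝ → Prop) : Prop where
  smul : ∀ k x y z, E x y z → E (k * x) (k * y) (k * z)
  add : ∀ x y z x' y' z', E x y z → E x' y' z' → x * x' + y * y' + z * z' = 0 →
    E (x + x') (y + y') (z + z')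

theorem OrthClosed.comb {E : ℝ → ℝ → ℝ → Prop} (hE : OrthClosed E) (k l x y z x' y' z' : ℝ)
    (h : E x y z) (h' : E x' y' z') (ho : x * x' + y * y' + z * z' = 0) {X Y Z : ℝ}
    (hX : X = k * x + l * x') (hY : Y = k * y + l * y') (hZ : Z = k * z + l * z') :
    E X Y Z := by
  subst hX hY hZ
  refine hE.add _ _ _ _ _ _ (hE.smul k _ _ _ h) (hE.smul l _ _ _ h') ?_
  linear_combination k * l * ho

theorem orth_final {E : ℝ → ℝ → ℝ → Prop} (hE : OrthClosed E) (s : ℝ) (hs : 0 < s)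
    (h1 : 1 ≤ 2 * s ^ 2) (h2 : s ^ 2 ≤ 1)
    (hp : ∀ y z, E (-s * y) y z) (hm : ∀ y z, E (s * y) y z) : ∀ a b c, E a b c := by
  obtain ⟨x, hx⟩ : ∃ x : ℝ, x ^ 2 = (2 - s ^ 2) / (1 + s ^ 2) :=
    ⟨√_, Real.sq_sqrt (div_nonneg (by linarith) (by positivity))⟩
  obtain ⟨y, hy⟩ : ∃ y : ℝ, y ^ 2 = (2 * s ^ 2 - 1) / (1 + s ^ 2) :=
    ⟨√_, Real.sq_sqrt (div_nonneg (by linarith) (by positivity))⟩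
  have hxy : x ^ 2 + y ^ 2 = 1 := by rw [hx, hy]; field_simp; ring
  have hq : 1 - s ^ 2 + y ^ 2 = x ^ 2 * s ^ 2 := by rw [hx, hy]; field_simp; ring
  have u1 := hp 1 (x * s - y)
  have v1 := hm 1 (-x * s - y)
  have u2 := hp (-1) (x * s - y)
  have v2 := hm (-1) (-x * s - y)
  have A : E x y (-1) := by
    refine hE.comb ((y - x / s) / 2) ((y + x / s) / 2) _ _ _ _ _ _ u1 v1 ?_ ?_ ?_ ?_
    · linear_combination hq
    · field_simp; ring
    · ring
    · field_simp; linear_combination 2 * s * hxy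
  have B : E x y 1 := by
    refine hE.comb ((-y + x / s) / 2) ((-y - x / s) / 2) _ _ _ _ _ _ u2 v2 ?_ ?_ ?_ ?_
    · linear_combination hq
    · field_simp; ring
    · ring
    · field_simp; linear_combination -2 * s * hxy
  have C : E y (-x) 0 := by
    refine hE.comb ((-x - y / s) / 2) ((-x + y / s) / 2) _ _ _ _ _ _ u1 v1 ?_ ?_ ?_ ?_
    · linear_combination hq
    · field_simp; ring
    · ring
    · field_simp; ring
  intro a b c
  have AB : E ((a * x + b * y) * x) ((a * x + b * y) * y) c :=
    hE.comb ((a * x + b * y - c) / 2) ((a * x + b * y + c) / 2) _ _ _ _ _ _ A B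
      (by linear_combination hxy) (by ring) (by ring) (by ring)
  exact hE.comb 1 (a * y - b * x) _ _ _ _ _ _ AB C (by ring)
    (by linear_combination (-a) * hxy) (by linear_combination (-b) * hxy) (by ring)

theorem orth_iter (k : ℕ) : ∀ {E : ℝ → ℝ → ℝ → Prop} (_ : OrthClosed E) (s : ℝ) (_ : 0 < s)
    (_ : 1 ≤ (k + 2) * s ^ 2) (_ : s ^ 2 ≤ 1)
    (_ : ∀ y z, E (-s * y) y z) (_ : ∀ y z, E (s * y) y z), ∀ a b c, E a b c := by
  induction k with
  | zero =>
    intro E hE s hs h1 h2 hp hm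
    exact orth_final hE s hs (by simpa using h1) h2 hp hm
  | succ k ih =>
    intro E hE s hs h1 h2 hp hm
    by_cases h : 1 ≤ 2 * s ^ 2
    · exact orth_final hE s hs h h2 hp hm
    push Not at h
    have hpos : 0 < 1 - s ^ 2 := by linarith
    obtain ⟨r, hr0, hr⟩ : ∃ r : ℝ, 0 < r ∧ r ^ 2 = s ^ 2 / (1 - s ^ 2) :=
      ⟨√(s ^ 2 / (1 - s ^ 2)), Real.sqrt_pos.2 (by positivity), Real.sq_sqrt (by positivity)⟩
    have hrs : r ^ 2 * (1 - s ^ 2) = s ^ 2 := by rw [hr]; field_simp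
    have hE' : OrthClosed (fun x y z => E x z y) :=
      ⟨fun k x y z h => hE.smul k x z y h,
       fun x y z x' y' z' h h' ho => hE.add _ _ _ _ _ _ h h' (by linarith)⟩
    have key := ih hE' r hr0 ?_ ?_ ?_ ?_
    · intro a b c
      exact key a c b
    · rw [hr, ← mul_div_assoc, le_div_iff₀ hpos]
      push_cast at h1
      linarith
    · rw [hr, div_le_one hpos]; linarith
    · intro z y
      refine hE.comb ((y / r + z / s) / 2) ((y / r - z / s) / 2) _ _ _ _ _ _ (hp r s) (hm r (-s))
        ?_ ?_ ?_ ?_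
      · linear_combination hrs
      · field_simp; ring
      · field_simp; ring
      · field_simp; ring
    · intro z y
      refine hE.comb ((y / r + z / s) / 2) ((y / r - z / s) / 2) _ _ _ _ _ _ (hm r s) (hp r (-s))
        ?_ ?_ ?_ ?_
      · linear_combination hrs
      · field_simp; ring
      · field_simp; ring
      · field_simp; ring

theorem orth_main {E : ℝ → ℝ → ℝ → Prop} (hE : OrthClosed E) (t : ℝ) (ht : 0 < t)
    (hQ : ∀ x y, E x y 0) (hy : E 1 0 t) : E 0 0 1 := by
  have hQ' : ∀ k l, E k l (k * t) := fun k l =>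
    hE.comb k l _ _ _ _ _ _ hy (hQ 0 1) (by ring) (by ring) (by ring) (by ring)
  obtain ⟨h, rfl⟩ : ∃ h, t = 2 * h := ⟨t / 2, by ring⟩
  have hh : 0 < h := by linarith
  obtain ⟨ρ, hρ, hρ2⟩ : ∃ ρ : ℝ, 0 < ρ ∧ ρ ^ 2 = 1 + h ^ 2 :=
    ⟨√(1 + h ^ 2), Real.sqrt_pos.2 (by positivity), Real.sq_sqrt (by positivity)⟩
  have hE' : OrthClosed (fun X Y Z => E ((-h * X + Z) / ρ) Y ((X + h * Z) / ρ)) := by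
    refine ⟨fun k x y z H => ?_, fun x y z x' y' z' H H' ho => ?_⟩
    · exact hE.comb k 0 _ _ _ 0 0 0 H (hQ 0 0) (by ring) (by ring) (by ring) (by ring)
    · refine hE.comb 1 1 _ _ _ _ _ _ H H' ?_ (by ring) (by ring) (by ring)
      rw [← ho]
      field_simp
      linear_combination (-(x * x') - z * z') * hρ2
  obtain ⟨k, hk⟩ := exists_nat_ge (1 / (h / ρ) ^ 2)
  have hs : 0 < h / ρ := by positivity
  have key := orth_iter k hE' (h / ρ) hs ?_ ?_ ?_ ?_ (1 / ρ) 0 (h / ρ)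
  · refine hE.comb 1 0 _ _ _ 0 0 0 key (hQ 0 0) (by ring) ?_ (by ring) ?_
    · ring
    · field_simp; linear_combination hρ2
  · rw [div_le_iff₀ (by positivity)] at hk
    nlinarith [pow_pos hs 2]
  · rw [div_pow, div_le_one (by positivity)]; linarith
  · skip
    intro y z
    have u := hQ 1 1
    have v := hQ' 1 (-1)
    refine hE.comb (y + (-h / ρ * y + h * z) / ρ / (2 * h)) ((-(h / ρ) * y + h * z) / ρ / (2 * h))
      _ _ _ _ _ _ u v (by ring) ?_ ?_ ?_
    · field_simp
      linear_combination (-2 * y) * hρ2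
    · field_simp; ring
    · field_simp; ring
  · intro y z
    have u := hQ 1 (-1)
    have v := hQ' 1 1
    refine hE.comb (-y + (h / ρ * y + h * z) / ρ / (2 * h)) (((h / ρ) * y + h * z) / ρ / (2 * h))
      _ _ _ _ _ _ u v (by ring) ?_ ?_ ?_
    · field_simp
      linear_combination (2 * y) * hρ2
    · field_simp; ring
    · field_simp; ring

theorem plane_add {H : Type} [NormedAddCommGroup H] [InnerProductSpace ℂ H]
    (D : H → Prop) (hsmul : ∀ (c : ℂ) x, D x → D (c • x))
    (hadd : ∀ x y, D x → D y → ⟪x, y⟫_ℂ = 0 → D (x + y))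
    (Q : Submodule ℂ H) (hQ : Module.finrank ℂ Q = 2) (hD : ∀ q ∈ Q, D q)
    (y : H) (hy : D y) (q : H) (hq : q ∈ Q) : D (q + y) := by
  haveI : FiniteDimensional ℂ Q := Module.finite_of_finrank_pos (by omega)
  obtain ⟨p, hp, w, hw, rfl⟩ := Q.exists_add_mem_mem_orthogonal y
  have fin : D w → D (q + (p + w)) := fun h => by
    rw [← add_assoc]
    exact hadd _ _ (hD _ (Q.add_mem hq hp)) h (hw _ (Q.add_mem hq hp))
  by_cases hp0 : p = 0
  · subst hp0; exact fin (by simpa using hy)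
  by_cases hw0 : w = 0
  · subst hw0; exact hD _ (Q.add_mem hq (Q.add_mem hp Q.zero_mem))
  obtain ⟨b, hb, hb0, hpb⟩ : ∃ b ∈ Q, b ≠ 0 ∧ ⟪p, b⟫_ℂ = 0 := by
    by_contra hcon
    push Not at hcon
    have : Q ≤ Submodule.span ℂ {p} := by
      intro v hv
      have hpp : ⟪p, p⟫_ℂ ≠ 0 := by simpa using hp0
      have hv' : v - (⟪p, v⟫_ℂ / ⟪p, p⟫_ℂ) • p ∈ Q := Q.sub_mem hv (Q.smul_mem _ hp)
      by_cases h0 : v - (⟪p, v⟫_ℂ / ⟪p, p⟫_ℂ) • p = 0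
      · rw [sub_eq_zero] at h0
        exact Submodule.mem_span_singleton.2 ⟨_, h0.symm⟩
      · exact absurd (by rw [inner_sub_right, inner_smul_right]; field_simp; ring) (hcon _ hv' h0)
    have h1 := Submodule.finrank_mono this
    have h2 := finrank_span_singleton (K := ℂ) hp0
    omega
  have np : (0:ℝ) < ‖p‖ := norm_pos_iff.2 hp0
  have nb : (0:ℝ) < ‖b‖ := norm_pos_iff.2 hb0
  have nw : (0:ℝ) < ‖w‖ := norm_pos_iff.2 hw0
  have hpw : ⟪p, w⟫_ℂ = 0 := hw p hp
  have hbw : ⟪b, w⟫_ℂ = 0 := hw b hb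
  have hbp : ⟪b, p⟫_ℂ = 0 := inner_eq_zero_symm.1 hpb
  have hwp : ⟪w, p⟫_ℂ = 0 := inner_eq_zero_symm.1 hpw
  have hwb : ⟪w, b⟫_ℂ = 0 := inner_eq_zero_symm.1 hbw
  have np' : (‖p‖ : ℂ) ≠ 0 := by exact_mod_cast np.ne'
  have nb' : (‖b‖ : ℂ) ≠ 0 := by exact_mod_cast nb.ne'
  have nw' : (‖w‖ : ℂ) ≠ 0 := by exact_mod_cast nw.ne'
  let E : ℝ → ℝ → ℝ → Prop := fun x y z =>
    D (((x / ‖p‖ : ℝ) : ℂ) • p + ((y / ‖b‖ : ℝ) : ℂ) • b + ((z / ‖w‖ : ℝ) : ℂ) • w)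
  have hE : OrthClosed E := by
    refine ⟨fun k x y z h => ?_, fun x y z x' y' z' h h' ho => ?_⟩
    · have := hsmul (k : ℂ) _ h
      simp only [E]
      convert this using 1
      simp only [smul_add, smul_smul]
      push_cast
      simp only [mul_div_assoc]
    · have := hadd _ _ h h' ?_
      · simp only [E]
        convert this using 1
        push_cast
        module
      · simp only [inner_add_left, inner_add_right, inner_smul_left, inner_smul_right, hpw, hbw,
          hbp, hwp, hwb, hpb, inner_self_eq_norm_sq_to_K, Complex.conj_ofReal]
        have ho' : (x * x' + y * y' + z * z' : ℂ) = 0 := by exact_mod_cast ho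
        push_cast
        simp only [Complex.coe_algebraMap]
        field_simp
        linear_combination (‖p‖ * ‖b‖ * ‖w‖ : ℂ) * ho'
  have key := orth_main hE (‖w‖ / ‖p‖) (by positivity) ?_ ?_
  · apply fin
    have := hsmul (‖w‖ : ℂ) _ key
    convert this using 1
    simp [smul_smul, nw']
  · intro x y
    apply hD
    simp only [zero_div, Complex.ofReal_zero, zero_smul, add_zero]
    exact Q.add_mem (Q.smul_mem _ hp) (Q.smul_mem _ hb)
  · have := hsmul ((1 / ‖p‖ : ℝ) : ℂ) _ hy
    simp only [E]
    convert this using 1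
    have : ‖w‖ / ‖p‖ / ‖w‖ = 1 / ‖p‖ := by field_simp
    rw [this]
    simp

/-- If a finitely additive measure `m` on the closed subspaces of a complex Hilbert
space `H` with `dim H ≥ 3` has the L-S property (some two-dimensional subspace has
finite measure), then `D(m) = {x ≠ 0 : m(span{x}) < ∞} ∪ {0}` is a linear subspace
of `H`. -/
theorem LS_property_domain_subspace {H : Type} [NormedAddCommGroup H]
    [InnerProductSpace ℂ H] [CompleteSpace H]
    (hdim : 3 ≤ Module.rank ℂ H)
    (m : Submodule ℂ H → ℝ≥0∞)
    (h0 : m ⊥ = 0)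
    (hadd : ∀ M N : Submodule ℂ H, IsClosed ((M : Set H)) → IsClosed ((N : Set H)) →
      (∀ u ∈ M, ∀ v ∈ N, ⟪u, v⟫_ℂ = 0) → m (M ⊔ N) = m M + m N)
    (hLS : ∃ Q : Submodule ℂ H, Module.finrank ℂ Q = 2 ∧ m Q < ∞) :
    ∃ S : Submodule ℂ H,
      (S : Set H) = {x : H | x ≠ 0 ∧ m (Submodule.span ℂ {x}) < ∞} ∪ {0} := by
  have mono : ∀ M N : Submodule ℂ H, FiniteDimensional ℂ N → M ≤ N → m M ≤ m N := by
    intro M N _ hMN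
    haveI : FiniteDimensional ℂ M := Submodule.finiteDimensional_of_le hMN
    haveI : FiniteDimensional ℂ (Mᗮ ⊓ N : Submodule ℂ H) :=
      Submodule.finiteDimensional_of_le inf_le_right
    have h := hadd M (Mᗮ ⊓ N) M.closed_of_finiteDimensional
      (Submodule.closed_of_finiteDimensional _) (fun u hu v hv => hv.1 u hu)
    rw [Submodule.sup_orthogonal_inf_of_hasOrthogonalProjection hMN] at h
    rw [h]
    exact le_self_add
  let D : H → Prop := fun x => m (Submodule.span ℂ {x}) < ∞
  have D0 : D 0 := by simp [D, h0]
  have hsmul : ∀ (c : ℂ) x, D x → D (c • x) := fun c x hx =>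
    (mono _ _ inferInstance (Submodule.span_singleton_smul_le ℂ c x)).trans_lt hx
  have horth : ∀ x y, D x → D y → ⟪x, y⟫_ℂ = 0 → D (x + y) := by
    intro x y hx hy hxy
    have h := hadd (Submodule.span ℂ {x}) (Submodule.span ℂ {y})
      (Submodule.closed_of_finiteDimensional _) (Submodule.closed_of_finiteDimensional _) (by
        intro u hu v hv
        obtain ⟨a, rfl⟩ := Submodule.mem_span_singleton.1 hu
        obtain ⟨b, rfl⟩ := Submodule.mem_span_singleton.1 hv
        simp [inner_smul_left, inner_smul_right, hxy])
    refine (mono _ (Submodule.span ℂ {x} ⊔ Submodule.span ℂ {y}) inferInstance ?_).trans_lt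
      (h ▸ ENNReal.add_lt_top.2 ⟨hx, hy⟩)
    rw [Submodule.span_singleton_le_iff_mem]
    exact Submodule.add_mem_sup (Submodule.mem_span_singleton_self _)
      (Submodule.mem_span_singleton_self _)
  obtain ⟨Q, hQ2, hQm⟩ := hLS
  haveI : FiniteDimensional ℂ Q := Module.finite_of_finrank_pos (by omega)
  have hQD : ∀ q ∈ Q, D q := fun q hq =>
    (mono _ Q inferInstance ((Submodule.span_singleton_le_iff_mem _ _).2 hq)).trans_lt hQm
  have T := plane_add D hsmul horth
  have hDadd : ∀ x y, D x → D y → D (x + y) := by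
    intro x y hx hy
    by_cases hxQ : x ∈ Q
    · exact T Q hQ2 hQD y hy x hxQ
    obtain ⟨z, hz, hz0⟩ : ∃ z ∈ Q, z ≠ 0 := by
      apply Submodule.exists_mem_ne_zero_of_ne_bot
      rintro rfl
      simp at hQ2
    have hli : LinearIndependent ℂ ![z, x] := by
      rw [LinearIndependent.pair_iff' hz0]
      rintro a rfl
      exact hxQ (Q.smul_mem _ hz)
    have hfr := finrank_span_eq_card hli
    rw [Matrix.range_cons, Matrix.range_cons, Matrix.range_empty, Set.union_empty,
      Set.singleton_union, Fintype.card_fin] at hfr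
    refine T (Submodule.span ℂ {z, x}) hfr ?_ y hy x (Submodule.subset_span (by simp))
    intro v hv
    obtain ⟨a, b, rfl⟩ := Submodule.mem_span_pair.1 hv
    exact T Q hQ2 hQD _ (hsmul b x hx) _ (Q.smul_mem a hz)
  refine ⟨⟨⟨⟨{x | D x}, fun {a b} ha hb => hDadd a b ha hb⟩, D0⟩, fun c x hx => hsmul c x hx⟩, ?_⟩
  ext x
  change D x ↔ _
  by_cases hx : x = 0
  · subst hx; simp [D0]
  · simp [hx, D]
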